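/- Exponential private PAC-DEC lower bound for learning parity: There is a universal constant c > 0 with the following property. Let d ≥ 2, X = {0,1}^d, and for S ⊆ [d] let f_S : X → {−1,1} be f_S(x) = (−1)^{Σ_{i∈S} x_i}. Let M_parity be the class of all probability distributions of (x,y) ∈ X × {−1,1} of the form x ∼ ν, y = f_S(x), where ν ranges over all probability distributions on X and S over all subsets of [d]; the decision space is Π = { f : X → {−1,1} } and the loss is L(M, f) = P_{(x,y)∼M}( f(x) ≠ y ). Then for every ε ∈ [0, (2^d − 1)^{−1/2}]: p-dec^{LDP}_ε(M_parity) ≥ c·√(2^d)·ε. -/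

import Mathlib

open MeasureTheory
open scoped ENNReal

/-- `D_ℓ(P, Q) := |E_{z ∼ P} ℓ(z) − E_{z ∼ Q} ℓ(z)|`. -/
noncomputable def Dl {Z : Type*} [MeasurableSpace Z] (ℓ : Z → ℝ) (P Q : Measure Z) : ℝ :=
  |(∫ z, ℓ z ∂P) - ∫ z, ℓ z ∂Q|

/-- A distribution `q ∈ Δ(Θ × L)` over pairs of a decision and a measurable `[0,1]`-valued
test function on `Z`. -/
def IsTestDist {Θ Z : Type*} [MeasurableSpace Θ] [MeasurableSpace Z]
    (q : Measure (Θ × (Z → ℝ))) : Prop :=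
  IsProbabilityMeasure q ∧
    q {pl | Measurable pl.2 ∧ ∀ z, pl.2 z ∈ Set.Icc (0 : ℝ) 1} = 1

/-- `E_{(π,ℓ)∼q} D_ℓ(M_i(π), M̄(π))²`. -/
noncomputable def testErr {Θ Z ι : Type*} [MeasurableSpace Θ] [MeasurableSpace Z]
    (Ms : ι → Θ → Measure Z) (Mb : Θ → Measure Z)
    (q : Measure (Θ × (Z → ℝ))) (i : ι) : ℝ :=
  ∫ pl, (Dl pl.2 (Ms i pl.1) (Mb pl.1)) ^ 2 ∂q

/-- The private PAC-DEC of the model class `(Ms i)_{i : ι}` with loss `loss` and reference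
model `Mb`:
`p-dec^{LDP}_ε(M, M̄) := inf_{p ∈ Δ(Θ), q ∈ Δ(Θ×L)}
  sup { E_{π∼p} L(M,π) : M ∈ M, E_{(π,ℓ)∼q} D_ℓ(M(π), M̄(π))² ≤ ε² }`,
where the supremum over the empty set is `−∞` (i.e. `⊥` in `EReal`). -/
noncomputable def pdecLDP {Θ Z ι : Type*} [MeasurableSpace Θ] [MeasurableSpace Z]
    (Ms : ι → Θ → Measure Z) (loss : ι → Θ → ℝ) (Mb : Θ → Measure Z) (ε : ℝ) : EReal :=
  ⨅ (p : {p : Measure Θ // IsProbabilityMeasure p})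
    (q : {q : Measure (Θ × (Z → ℝ)) // IsTestDist q}),
    sSup {x : EReal | ∃ i : ι, testErr Ms Mb q.1 i ≤ ε ^ 2 ∧
      x = ((∫ π, loss i π ∂p.1 : ℝ) : EReal)}

/-- `evenParity d S x` is `true` iff `Σ_{i ∈ S} x_i` is even, i.e. iff the parity function
`f_S(x) = (−1)^{Σ_{i∈S} x_i}` equals `+1` (we encode the label set `{−1,1}` by `Bool`,
with `true ↔ +1`). -/
def evenParity (d : ℕ) (S : Finset (Fin d)) (x : Fin d → Bool) : Bool :=
  decide ((S.filter fun i => x i = true).card % 2 = 0)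

/-- The parity model: the distribution of `(x, y)` with `x ∼ ν` and `y = f_S(x)`. -/
noncomputable def parityModel (d : ℕ) (ν : Measure (Fin d → Bool)) (S : Finset (Fin d)) :
    Measure ((Fin d → Bool) × Bool) :=
  ν.map fun x => (x, evenParity d S x)

/-- The class of all finite mixtures of parity models, i.e. `co(M_parity)`. -/
def coParity (d : ℕ) : Set (Measure ((Fin d → Bool) × Bool)) :=
  {Mb | ∃ (n : ℕ) (w : Fin n → ℝ) (ν : Fin n → Measure (Fin d → Bool))
      (S : Fin n → Finset (Fin d)),
      (∀ k, 0 ≤ w k) ∧ (∑ k, w k) = 1 ∧ (∀ k, IsProbabilityMeasure (ν k)) ∧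
      Mb = ∑ k, ENNReal.ofReal (w k) • parityModel d (ν k) (S k)}

/-!
For any covariate law `ν`, take as reference the uniform mixture over `S` of the parity models with
covariate law `ν`. All parities agree at the origin, so for a `[0,1]`-valued test `ℓ` the
expectations under the `S`-th model and under the mixture differ by `∑_{x ≠ 0} h(x) f_S(x)` with
`|h(x)| ≤ ν(x) / 2`. By Parseval the squared difference averages over `S` to at most
`∑_{x ≠ 0} ν(x)² / 4`. On the other hand, the error of any predictor off the origin never exceeds
`ν(x ≠ 0)` and averages over `S` to half of it. Hence if `∑_{x ≠ 0} ν(x)² ≤ ε²`, Markov's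
inequality yields an `S` which passes the test constraint and has loss at least `ν(x ≠ 0) / 3`.

The law `ν` that spreads mass `t = ε √(2^d - 1)` evenly over the nonzero points and puts the rest at
the origin has `∑_{x ≠ 0} ν(x)² = ε²`, and `t ≥ ε √(2^d) / 2`.
-/

section

open ProbabilityTheory
open scoped BigOperators

section Averaging

variable {ι : Type*} [Fintype ι]

lemma one_sub_mul_card_le_card_filter_le {f : ι → ℝ} (hf : ∀ i, 0 ≤ f i) {δ a : ℝ} (hδ : 0 ≤ δ)
    (ha : 0 ≤ a) (hfa : 𝔼 i, f i ≤ δ * a) :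
    (1 - δ) * Fintype.card ι ≤ (Finset.univ.filter (f · ≤ a)).card := by
  suffices hbad : ((Finset.univ.filter (¬ f · ≤ a)).card : ℝ) ≤ δ * Fintype.card ι by
    have hsplit : ((Finset.univ.filter (f · ≤ a)).card : ℝ) +
        (Finset.univ.filter (¬ f · ≤ a)).card = Fintype.card ι := by
      exact_mod_cast Finset.card_filter_add_card_filter_not (s := Finset.univ) (f · ≤ a)
    linarith
  have hsum : ∑ i, f i ≤ Fintype.card ι * (δ * a) := by
    rw [← Fintype.card_mul_expect]
    gcongr
  rcases ha.eq_or_lt with rfl | ha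
  · have hzero : ∀ i, f i ≤ 0 := fun i =>
      (Finset.single_le_sum (fun j _ => hf j) (Finset.mem_univ i)).trans (by simpa using hsum)
    simp only [hzero, not_true_eq_false, Finset.filter_false, Finset.card_empty, Nat.cast_zero]
    positivity
  · refine le_of_mul_le_mul_right ?_ ha
    calc ((Finset.univ.filter (¬ f · ≤ a)).card : ℝ) * a
        ≤ ∑ i ∈ Finset.univ.filter (¬ f · ≤ a), f i := by
          rw [← nsmul_eq_mul]
          exact Finset.card_nsmul_le_sum _ _ _ fun i hi => (not_le.1 (Finset.mem_filter.1 hi).2).le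
      _ ≤ ∑ i, f i := Finset.sum_le_univ_sum_of_nonneg hf
      _ ≤ δ * Fintype.card ι * a := by linarith

lemma exists_le_and_one_sub_mul_le_expect [Nonempty ι] {f g : ι → ℝ} (hf : ∀ i, 0 ≤ f i)
    (hg : ∀ i, 0 ≤ g i) {δ a : ℝ} (hδ₀ : 0 ≤ δ) (hδ₁ : δ < 1) (ha : 0 ≤ a)
    (hfa : 𝔼 i, f i ≤ δ * a) : ∃ i, f i ≤ a ∧ (1 - δ) * g i ≤ 𝔼 j, g j := by
  set G := Finset.univ.filter (f · ≤ a)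
  have hcard : (0 : ℝ) < Fintype.card ι := by exact_mod_cast Fintype.card_pos
  have hG : (1 - δ) * Fintype.card ι ≤ G.card :=
    one_sub_mul_card_le_card_filter_le hf hδ₀ ha hfa
  have hGne : G.Nonempty := by
    rw [← Finset.card_pos, ← Nat.cast_pos (α := ℝ)]
    exact (mul_pos (sub_pos.2 hδ₁) hcard).trans_le hG
  obtain ⟨i, hiG, hmin⟩ := G.exists_min_image g hGne
  refine ⟨i, (Finset.mem_filter.1 hiG).2, le_of_mul_le_mul_left ?_ hcard⟩
  calc Fintype.card ι * ((1 - δ) * g i) = (1 - δ) * Fintype.card ι * g i := by ring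
    _ ≤ G.card * g i := by gcongr; exact hg i
    _ ≤ ∑ j ∈ G, g j := by
        rw [← nsmul_eq_mul]
        exact Finset.card_nsmul_le_sum _ _ _ hmin
    _ ≤ ∑ j, g j := Finset.sum_le_univ_sum_of_nonneg hg
    _ = Fintype.card ι * 𝔼 j, g j := (Fintype.card_mul_expect g).symm

lemma integral_expect {α : Type*} [MeasurableSpace α] {μ : Measure α} {f : ι → α → ℝ}
    (hf : ∀ i, Integrable (f i) μ) : ∫ x, 𝔼 i, f i x ∂μ = 𝔼 i, ∫ x, f i x ∂μ := by
  simp only [Fintype.expect_eq_sum_div_card]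
  rw [integral_div, integral_finsetSum _ fun i _ => hf i]

lemma integrable_expect {α : Type*} [MeasurableSpace α] {μ : Measure α} {f : ι → α → ℝ}
    (hf : ∀ i, Integrable (f i) μ) : Integrable (fun x => 𝔼 i, f i x) μ := by
  simp only [Fintype.expect_eq_sum_div_card]
  exact (integrable_finsetSum _ fun i _ => hf i).div_const _

/-- The mixture of the measures `P i` in which every index has the same weight. -/
noncomputable def uniformMixture {Z : Type*} [MeasurableSpace Z] (P : ι → Measure Z) : Measure Z :=
  ∑ i, (Fintype.card ι : ℝ≥0∞)⁻¹ • P i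

instance {Z : Type*} [MeasurableSpace Z] (P : ι → Measure Z) [∀ i, IsFiniteMeasure (P i)] :
    IsFiniteMeasure (uniformMixture P) := by
  have (i : ι) : IsFiniteMeasure ((Fintype.card ι : ℝ≥0∞)⁻¹ • P i) :=
    have : Nonempty ι := ⟨i⟩
    (P i).smul_finite (by simp)
  unfold uniformMixture
  infer_instance

lemma integral_uniformMixture {Z : Type*} [MeasurableSpace Z] {P : ι → Measure Z} {g : Z → ℝ}
    (hg : ∀ i, Integrable g (P i)) : ∫ z, g z ∂uniformMixture P = 𝔼 i, ∫ z, g z ∂P i := by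
  have hint (i : ι) : Integrable g ((Fintype.card ι : ℝ≥0∞)⁻¹ • P i) :=
    have : Nonempty ι := ⟨i⟩
    (hg i).smul_measure (by simp)
  rw [uniformMixture, integral_finsetSum_measure fun i _ => hint i]
  simp only [integral_smul_measure, ENNReal.toReal_inv, ENNReal.toReal_natCast, smul_eq_mul]
  rw [← Finset.mul_sum, Fintype.expect_eq_sum_div_card, div_eq_inv_mul]

end Averaging

section PDEC

variable {Θ Z ι κ : Type*} [MeasurableSpace Θ] [MeasurableSpace Z]

lemma measurable_Dl [Finite Z] [MeasurableSingletonClass Z] [DiscreteMeasurableSpace Θ]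
    (P Q : Θ → Measure Z) [∀ π, IsFiniteMeasure (P π)] [∀ π, IsFiniteMeasure (Q π)] :
    Measurable fun x : Θ × (Z → ℝ) => Dl x.2 (P x.1) (Q x.1) := by
  have := Fintype.ofFinite Z
  have hmeas (R : Θ → Measure Z) [∀ π, IsFiniteMeasure (R π)] :
      Measurable fun x : Θ × (Z → ℝ) => ∫ z, x.2 z ∂(R x.1) := by
    simp only [integral_fintype .of_finite, smul_eq_mul]
    refine Finset.measurable_fun_sum _ fun z _ => Measurable.mul ?_ (by fun_prop)
    exact (Measurable.of_discrete (f := fun π => (R π).real {z})).comp measurable_fst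
  exact ((hmeas P).sub (hmeas Q)).abs

lemma IsTestDist.ae_mem_Icc [Countable Z] [MeasurableSingletonClass Z]
    {q : Measure (Θ × (Z → ℝ))} (hq : IsTestDist q) :
    ∀ᵐ x ∂q, ∀ z, x.2 z ∈ Set.Icc (0 : ℝ) 1 := by
  have := hq.1
  have hset : {x : Θ × (Z → ℝ) | Measurable x.2 ∧ ∀ z, x.2 z ∈ Set.Icc (0 : ℝ) 1} =
      ⋂ z, (fun x : Θ × (Z → ℝ) => x.2 z) ⁻¹' Set.Icc 0 1 := by
    ext x
    simp [Measurable.of_discrete]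
  have hmeas : MeasurableSet
      {x : Θ × (Z → ℝ) | Measurable x.2 ∧ ∀ z, x.2 z ∈ Set.Icc (0 : ℝ) 1} := by
    rw [hset]
    exact MeasurableSet.iInter fun z => measurableSet_Icc.preimage (by fun_prop)
  filter_upwards [(mem_ae_iff_prob_eq_one hmeas).2 hq.2] with x hx using hx.2

lemma testErr_nonneg (Ms : ι → Θ → Measure Z) (Mb : Θ → Measure Z) (q : Measure (Θ × (Z → ℝ)))
    (i : ι) : 0 ≤ testErr Ms Mb q i :=
  integral_nonneg fun _ => sq_nonneg _

lemma expect_testErr_le [Finite Z] [MeasurableSingletonClass Z] [DiscreteMeasurableSpace Θ]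
    [Fintype ι] {Ms : ι → Θ → Measure Z} {Mb : Θ → Measure Z}
    [∀ i π, IsFiniteMeasure (Ms i π)] [∀ π, IsFiniteMeasure (Mb π)]
    {q : Measure (Θ × (Z → ℝ))} (hq : IsTestDist q) {C : ℝ}
    (hC : ∀ π ℓ, (∀ z, ℓ z ∈ Set.Icc (0 : ℝ) 1) → 𝔼 i, Dl ℓ (Ms i π) (Mb π) ^ 2 ≤ C) :
    𝔼 i, testErr Ms Mb q i ≤ C := by
  have := hq.1
  have hbound : ∀ᵐ x ∂q, 𝔼 i, Dl x.2 (Ms i x.1) (Mb x.1) ^ 2 ≤ C := by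
    filter_upwards [hq.ae_mem_Icc] with x hx using hC x.1 x.2 hx
  have hint (i : ι) : Integrable (fun x => Dl x.2 (Ms i x.1) (Mb x.1) ^ 2) q := by
    refine .of_bound ((measurable_Dl (Ms i) Mb).pow_const 2).aestronglyMeasurable
      (Fintype.card ι * C) ?_
    filter_upwards [hbound] with x hx
    rw [Real.norm_of_nonneg (sq_nonneg _)]
    calc Dl x.2 (Ms i x.1) (Mb x.1) ^ 2 ≤ ∑ j, Dl x.2 (Ms j x.1) (Mb x.1) ^ 2 :=
          Finset.single_le_sum (f := fun j => Dl x.2 (Ms j x.1) (Mb x.1) ^ 2)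
            (fun j _ => sq_nonneg _) (Finset.mem_univ i)
      _ = Fintype.card ι * 𝔼 j, Dl x.2 (Ms j x.1) (Mb x.1) ^ 2 :=
          (Fintype.card_mul_expect _).symm
      _ ≤ Fintype.card ι * C := by gcongr
  calc 𝔼 i, testErr Ms Mb q i = ∫ x, 𝔼 i, Dl x.2 (Ms i x.1) (Mb x.1) ^ 2 ∂q :=
        (integral_expect hint).symm
    _ ≤ ∫ _, C ∂q := integral_mono_ae (integrable_expect hint) (integrable_const C) hbound
    _ = C := by simp

variable [Finite Θ] [MeasurableSingletonClass Θ]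

lemma sub_div_le_pdecLDP_of_expect [Finite Z] [MeasurableSingletonClass Z]
    [Fintype ι] [Nonempty ι] {Ms : ι → Θ → Measure Z} {Mb : Θ → Measure Z} {loss : ι → Θ → ℝ}
    [∀ i π, IsFiniteMeasure (Ms i π)] [∀ π, IsFiniteMeasure (Mb π)]
    {ε δ b m : ℝ} (hδ₀ : 0 ≤ δ) (hδ₁ : δ < 1)
    (htest : ∀ π ℓ, (∀ z, ℓ z ∈ Set.Icc (0 : ℝ) 1) →
      𝔼 i, Dl ℓ (Ms i π) (Mb π) ^ 2 ≤ δ * ε ^ 2)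
    (hloss_le : ∀ i π, loss i π ≤ b) (hloss : ∀ π, b - m ≤ 𝔼 i, loss i π) :
    ((b - m / (1 - δ) : ℝ) : EReal) ≤ pdecLDP Ms loss Mb ε := by
  refine le_iInf fun ⟨p, _⟩ => le_iInf fun ⟨q, hq⟩ => ?_
  have hmean : 𝔼 i, (b - ∫ π, loss i π ∂p) ≤ m := by
    have hle : b - m ≤ 𝔼 i, ∫ π, loss i π ∂p := by
      rw [← integral_expect fun i => .of_finite]
      simpa using integral_mono (μ := p) (integrable_const (b - m)) .of_finite hloss
    rw [Finset.expect_sub_distrib, Fintype.expect_const]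
    linarith
  have hgap (i : ι) : 0 ≤ b - ∫ π, loss i π ∂p := by
    have := integral_mono (μ := p) .of_finite (integrable_const b) (hloss_le i)
    simpa using this
  obtain ⟨i, hi_test, hi_gap⟩ := exists_le_and_one_sub_mul_le_expect
    (testErr_nonneg Ms Mb q) hgap hδ₀ hδ₁ (sq_nonneg ε) (expect_testErr_le hq htest)
  refine le_sSup_of_le ⟨i, hi_test, rfl⟩ (EReal.coe_le_coe_iff.2 ?_)
  rw [sub_le_comm, le_div_iff₀' (sub_pos.2 hδ₁)]
  exact hi_gap.trans hmean

lemma pdecLDP_le_pdecLDP {Ms : ι → Θ → Measure Z} {Ms' : κ → Θ → Measure Z} {Mb : Θ → Measure Z}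
    {loss : ι → Θ → ℝ} {loss' : κ → Θ → ℝ} (e : κ → ι) (hMs : ∀ k, Ms' k = Ms (e k))
    (hloss : ∀ k π, loss' k π ≤ loss (e k) π) (ε : ℝ) :
    pdecLDP Ms' loss' Mb ε ≤ pdecLDP Ms loss Mb ε := by
  refine iInf_mono fun ⟨p, _⟩ => iInf_mono fun q => sSup_le ?_
  rintro _ ⟨k, hk, rfl⟩
  refine le_sSup_of_le ⟨e k, ?_, rfl⟩
    (EReal.coe_le_coe_iff.2 (integral_mono .of_finite .of_finite (hloss k)))
  simpa only [testErr, hMs] using hk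

end PDEC

section ParityCharacter

variable {d : ℕ}

/-- The parity function `f_S(x) = (−1)^{Σ_{i∈S} x_i}` as a real number, for use in Fourier
expansions on the cube. -/
noncomputable def parityChar (S : Finset (Fin d)) (x : Fin d → Bool) : ℝ :=
  ∏ i ∈ S, if x i then -1 else 1

lemma parityChar_eq_ite_evenParity (S : Finset (Fin d)) (x : Fin d → Bool) :
    parityChar S x = if evenParity d S x then 1 else -1 := by
  simp only [parityChar, evenParity, Finset.prod_ite, Finset.prod_const, one_pow, mul_one,
    decide_eq_true_eq, ← Nat.even_iff]
  exact neg_one_pow_eq_ite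

lemma parityChar_bot (S : Finset (Fin d)) : parityChar S ⊥ = 1 := by
  simp [parityChar]

lemma expect_parityChar_mul_parityChar (x y : Fin d → Bool) :
    𝔼 S, parityChar S x * parityChar S y = if x = y then 1 else 0 := by
  have hprod : ∑ S : Finset (Fin d), parityChar S x * parityChar S y =
      ∏ i, (1 + (if x i then -1 else 1) * (if y i then -1 else 1) : ℝ) := by
    rw [Finset.prod_one_add, Finset.powerset_univ]
    simp only [parityChar, Finset.prod_mul_distrib]
  rw [Fintype.expect_eq_sum_div_card, hprod]
  split_ifs with hxy
  · have hfactor (i : Fin d) : (1 + (if x i then -1 else 1) * (if x i then -1 else 1) : ℝ) = 2 := by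
      split_ifs <;> norm_num
    simp only [← hxy, hfactor]
    simp
  · obtain ⟨i, hi⟩ := Function.ne_iff.1 hxy
    have hfactor : (1 + (if x i then -1 else 1) * (if y i then -1 else 1) : ℝ) = 0 := by
      cases hx : x i <;> cases hy : y i <;> simp_all
    rw [Finset.prod_eq_zero (Finset.mem_univ i) hfactor, zero_div]

lemma expect_parityChar (x : Fin d → Bool) : 𝔼 S, parityChar S x = if x = ⊥ then 1 else 0 := by
  simpa only [parityChar_bot, mul_one] using expect_parityChar_mul_parityChar x ⊥

lemma expect_sum_mul_parityChar (h : (Fin d → Bool) → ℝ) :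
    𝔼 S, ∑ x, h x * parityChar S x = h ⊥ := by
  simp [Finset.expect_sum_comm, ← Finset.mul_expect, expect_parityChar]

lemma expect_sq_sum_mul_parityChar (s : Finset (Fin d → Bool)) (h : (Fin d → Bool) → ℝ) :
    𝔼 S, (∑ x ∈ s, h x * parityChar S x) ^ 2 = ∑ x ∈ s, h x ^ 2 := by
  calc 𝔼 S, (∑ x ∈ s, h x * parityChar S x) ^ 2
      = 𝔼 S, ∑ x ∈ s, ∑ y ∈ s, h x * h y * (parityChar S x * parityChar S y) := by
        simp only [sq, Finset.sum_mul_sum, mul_mul_mul_comm]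
    _ = ∑ x ∈ s, ∑ y ∈ s, h x * h y * 𝔼 S, parityChar S x * parityChar S y := by
        simp only [Finset.expect_sum_comm, Finset.mul_expect]
    _ = ∑ x ∈ s, h x ^ 2 := by
        simp +contextual [expect_parityChar_mul_parityChar, sq]

end ParityCharacter

section ParityModel

variable {d : ℕ} {ν : Measure (Fin d → Bool)}

instance [IsFiniteMeasure ν] (S : Finset (Fin d)) : IsFiniteMeasure (parityModel d ν S) := by
  unfold parityModel
  infer_instance

lemma uniformMixture_parityModel_mem_coParity [IsProbabilityMeasure ν] :
    uniformMixture (parityModel d ν) ∈ coParity d := by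
  refine ⟨Fintype.card (Finset (Fin d)), fun _ => (Fintype.card (Finset (Fin d)) : ℝ)⁻¹,
    fun _ => ν, (Fintype.equivFin _).symm, fun _ => by positivity, by simp,
    fun _ => inferInstance, ?_⟩
  dsimp only
  rw [ENNReal.ofReal_inv_of_pos (by exact_mod_cast Fintype.card_pos), ENNReal.ofReal_natCast]
  exact ((Fintype.equivFin _).symm.sum_comp _).symm

variable [IsFiniteMeasure ν]

lemma integral_parityModel (S : Finset (Fin d)) (ℓ : (Fin d → Bool) × Bool → ℝ) :
    ∫ z, ℓ z ∂parityModel d ν S =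
      ∑ x, ν.real {x} * ((ℓ (x, true) + ℓ (x, false)) / 2) +
        ∑ x, ν.real {x} * ((ℓ (x, true) - ℓ (x, false)) / 2) * parityChar S x := by
  rw [parityModel, integral_map Measurable.of_discrete.aemeasurable
    Measurable.of_discrete.aestronglyMeasurable, integral_fintype .of_finite,
    ← Finset.sum_add_distrib]
  refine Finset.sum_congr rfl fun x _ => ?_
  rw [parityChar_eq_ite_evenParity, smul_eq_mul]
  cases evenParity d S x <;> simp <;> ring

lemma expect_integral_parityModel (ℓ : (Fin d → Bool) × Bool → ℝ) :
    𝔼 S, ∫ z, ℓ z ∂parityModel d ν S =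
      ∑ x, ν.real {x} * ((ℓ (x, true) + ℓ (x, false)) / 2) +
        ν.real {⊥} * ((ℓ (⊥, true) - ℓ (⊥, false)) / 2) := by
  simp only [integral_parityModel, Finset.expect_add_distrib, Fintype.expect_const]
  rw [expect_sum_mul_parityChar fun x => ν.real {x} * ((ℓ (x, true) - ℓ (x, false)) / 2)]

lemma integral_parityModel_sub_integral_uniformMixture (S : Finset (Fin d))
    (ℓ : (Fin d → Bool) × Bool → ℝ) :
    ∫ z, ℓ z ∂parityModel d ν S - ∫ z, ℓ z ∂uniformMixture (parityModel d ν) =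
      ∑ x ∈ {⊥}ᶜ, ν.real {x} * ((ℓ (x, true) - ℓ (x, false)) / 2) * parityChar S x := by
  rw [integral_uniformMixture fun S => .of_finite, expect_integral_parityModel,
    integral_parityModel, add_sub_add_left_eq_sub, ← Finset.sum_compl_add_sum {⊥},
    Finset.sum_singleton, parityChar_bot, mul_one, add_sub_cancel_right]

lemma expect_Dl_parityModel_sq_le {ℓ : (Fin d → Bool) × Bool → ℝ}
    (hℓ : ∀ z, ℓ z ∈ Set.Icc (0 : ℝ) 1) :
    𝔼 S, Dl ℓ (parityModel d ν S) (uniformMixture (parityModel d ν)) ^ 2 ≤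
      1 / 4 * ∑ x ∈ {⊥}ᶜ, ν.real {x} ^ 2 := by
  simp only [Dl, sq_abs, integral_parityModel_sub_integral_uniformMixture]
  rw [expect_sq_sum_mul_parityChar, Finset.mul_sum]
  refine Finset.sum_le_sum fun x _ => ?_
  have hhalf : ((ℓ (x, true) - ℓ (x, false)) / 2) ^ 2 ≤ 1 / 4 := by
    obtain ⟨⟨ht₀, ht₁⟩, hf₀, hf₁⟩ := And.intro (hℓ (x, true)) (hℓ (x, false))
    nlinarith
  rw [mul_pow, mul_comm]
  gcongr

/-- The probability that the predictor `f` errs at a point other than the origin under the parity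
model. It replaces the loss in the averaging argument, as it is bounded by `ν {⊥}ᶜ`, which can be
much smaller than `1`. -/
noncomputable def offOriginLoss (ν : Measure (Fin d → Bool)) (S : Finset (Fin d))
    (f : (Fin d → Bool) → Bool) : ℝ :=
  (parityModel d ν S).real {z | z.1 ≠ ⊥ ∧ f z.1 ≠ z.2}

lemma offOriginLoss_le (S : Finset (Fin d)) (f : (Fin d → Bool) → Bool) :
    offOriginLoss ν S f ≤ ν.real {⊥}ᶜ := by
  rw [offOriginLoss, parityModel, map_measureReal_apply .of_discrete .of_discrete]
  exact measureReal_mono fun x hx => hx.1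

lemma offOriginLoss_le_loss (S : Finset (Fin d)) (f : (Fin d → Bool) → Bool) :
    offOriginLoss ν S f ≤ (parityModel d ν S {z | f z.1 ≠ z.2}).toReal :=
  measureReal_mono fun _ hz => hz.2

lemma expect_offOriginLoss (f : (Fin d → Bool) → Bool) :
    𝔼 S, offOriginLoss ν S f = ν.real {⊥}ᶜ / 2 := by
  set E : Set ((Fin d → Bool) × Bool) := {z | z.1 ≠ ⊥ ∧ f z.1 ≠ z.2} with hE
  have hsum (x : Fin d → Bool) :
      E.indicator (1 : (Fin d → Bool) × Bool → ℝ) (x, true) + E.indicator 1 (x, false) =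
        if x = ⊥ then 0 else 1 := by
    by_cases hx : x = ⊥ <;> cases hf : f x <;> simp [hE, hx, hf]
  have hbot (y : Bool) : E.indicator (1 : (Fin d → Bool) × Bool → ℝ) (⊥, y) = 0 := by simp [hE]
  have hcompl : ν.real {⊥}ᶜ = ∑ x ∈ ({⊥}ᶜ : Finset _), ν.real {x} := by
    rw [sum_measureReal_singleton, Finset.coe_compl, Finset.coe_singleton]
  simp only [offOriginLoss, ← hE, ← integral_indicator_one (MeasurableSet.of_discrete (s := E))]
  rw [expect_integral_parityModel, hcompl, ← Finset.sum_compl_add_sum {⊥}, Finset.sum_div]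
  simp only [hsum, hbot]
  simp +contextual [Finset.sum_congr, div_eq_mul_inv]

end ParityModel

/-- `p-dec^{LDP}_ε(M_parity, M̄)`, the private PAC-DEC of the parity class with reference
distribution `M̄`. -/
noncomputable def parityPDEC (d : ℕ) (Mb : Measure ((Fin d → Bool) × Bool)) (ε : ℝ) : EReal :=
  pdecLDP
    (fun (iv : {ν : Measure (Fin d → Bool) // IsProbabilityMeasure ν} × Finset (Fin d))
      (_ : (Fin d → Bool) → Bool) => parityModel d iv.1.1 iv.2)
    (fun iv f => (parityModel d iv.1.1 iv.2 {z | f z.1 ≠ z.2}).toReal)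
    (fun _ => Mb) ε

theorem measureReal_compl_bot_div_three_le_parityPDEC {d : ℕ} (ν : Measure (Fin d → Bool))
    [hν : IsProbabilityMeasure ν] {ε : ℝ} (hε : ∑ x ∈ {⊥}ᶜ, ν.real {x} ^ 2 ≤ ε ^ 2) :
    ((ν.real {⊥}ᶜ / 3 : ℝ) : EReal) ≤ parityPDEC d (uniformMixture (parityModel d ν)) ε := by
  calc ((ν.real {⊥}ᶜ / 3 : ℝ) : EReal)
      = ((ν.real {⊥}ᶜ - ν.real {⊥}ᶜ / 2 / (1 - 1 / 4) : ℝ) : EReal) := by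
        congr 1
        ring
    _ ≤ pdecLDP (fun S _ => parityModel d ν S) (offOriginLoss ν)
          (fun _ => uniformMixture (parityModel d ν)) ε := by
        refine sub_div_le_pdecLDP_of_expect (by norm_num) (by norm_num) (fun _ ℓ hℓ => ?_)
          offOriginLoss_le (fun f => ?_)
        · exact (expect_Dl_parityModel_sq_le hℓ).trans (by gcongr)
        · rw [expect_offOriginLoss, sub_half]
    _ ≤ parityPDEC d (uniformMixture (parityModel d ν)) ε := by
        refine pdecLDP_le_pdecLDP (fun S => (⟨ν, hν⟩, S)) ?_ ?_ ε
        · exact fun _ => rfl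
        · exact offOriginLoss_le_loss

section DiracUniform

variable {α : Type*} [MeasurableSpace α] [MeasurableSingletonClass α] {t : ℝ}

/-- The law that puts mass `1 - t` on the point `a` and spreads mass `t` evenly over the other
points of a finite type; a probability measure for `t ∈ [0, 1]`. -/
noncomputable def diracUniform (a : α) (t : ℝ) : Measure α :=
  ENNReal.ofReal (1 - t) • Measure.dirac a + ENNReal.ofReal t • uniformOn {a}ᶜ

lemma isProbabilityMeasure_diracUniform [Finite α] [Nontrivial α] (a : α)
    (ht : t ∈ Set.Icc (0 : ℝ) 1) :
    IsProbabilityMeasure (diracUniform a t) := by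
  have := isProbabilityMeasure_uniformOn (Set.toFinite {a}ᶜ) (Set.nonempty_compl_of_nontrivial a)
  constructor
  simp [diracUniform, ← ENNReal.ofReal_add (sub_nonneg.2 ht.2) ht.1]

lemma measureReal_diracUniform_compl [Finite α] [Nontrivial α] (a : α) (ht : 0 ≤ t) :
    (diracUniform a t).real {a}ᶜ = t := by
  have hself := uniformOn_self (Set.toFinite {a}ᶜ) (Set.nonempty_compl_of_nontrivial a)
  simp [diracUniform, measureReal_def, hself, ht]

lemma measureReal_diracUniform_singleton [Fintype α] {a x : α} (hx : x ≠ a) (ht : 0 ≤ t) :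
    (diracUniform a t).real {x} = t / (Fintype.card α - 1) := by
  classical
  have hunif : uniformOn ({a}ᶜ : Set α) {x} = ((Fintype.card α - 1 : ℕ) : ℝ≥0∞)⁻¹ := by
    have := uniformOn_apply_finset (s := {a}ᶜ) (t := {x})
    rw [Finset.inter_singleton_of_mem (by simpa using hx)] at this
    simpa [Finset.card_compl] using this
  have hcast : ((Fintype.card α - 1 : ℕ) : ℝ) = Fintype.card α - 1 :=
    Nat.cast_pred (Fintype.card_pos_iff.2 ⟨a⟩)
  rw [measureReal_def, diracUniform, Measure.add_apply, Measure.smul_apply, Measure.smul_apply,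
    hunif, Measure.dirac_apply, Set.indicator_of_notMem (by simpa using hx.symm), smul_zero,
    zero_add, smul_eq_mul, ENNReal.toReal_mul, ENNReal.toReal_ofReal ht, ENNReal.toReal_inv,
    ENNReal.toReal_natCast, hcast, div_eq_mul_inv]

lemma sum_sq_measureReal_diracUniform [Fintype α] [DecidableEq α] [Nontrivial α] (a : α)
    (ht : 0 ≤ t) :
    ∑ x ∈ {a}ᶜ, (diracUniform a t).real {x} ^ 2 = t ^ 2 / (Fintype.card α - 1) := by
  have hcard : (1 : ℝ) < Fintype.card α := by exact_mod_cast Fintype.one_lt_card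
  have hne : (Fintype.card α : ℝ) - 1 ≠ 0 := by linarith
  calc ∑ x ∈ {a}ᶜ, (diracUniform a t).real {x} ^ 2
      = ∑ x ∈ ({a}ᶜ : Finset α), (t / (Fintype.card α - 1)) ^ 2 :=
        Finset.sum_congr rfl fun x hx => by
          rw [measureReal_diracUniform_singleton (by simpa using hx) ht]
    _ = (Fintype.card α - 1) * (t / (Fintype.card α - 1)) ^ 2 := by
        rw [Finset.sum_const, Finset.card_compl, Finset.card_singleton, nsmul_eq_mul,
          Nat.cast_sub Fintype.card_pos, Nat.cast_one]
    _ = t ^ 2 / (Fintype.card α - 1) := by field_simp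

end DiracUniform

lemma sqrt_le_two_mul_sqrt_sub_one {a : ℝ} (ha : 4 / 3 ≤ a) : √a ≤ 2 * √(a - 1) := by
  rw [Real.sqrt_le_left (by positivity), mul_pow, Real.sq_sqrt (by linarith)]
  linarith

end

/-- **Exponential private PAC-DEC lower bound for learning parity.** There is a universal
constant `c > 0` such that, for every `d ≥ 2` and `ε ∈ [0, (2^d − 1)^{−1/2}]`, the private
PAC-DEC of the parity class `M_parity` (models `x ∼ ν`, `y = f_S(x)`; decisions
`f : {0,1}^d → {−1,1}`; loss `L(M, f) = P_{(x,y)∼M}(f(x) ≠ y)`; reference models ranging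
over `co(M_parity)`) satisfies `p-dec^{LDP}_ε(M_parity) ≥ c √(2^d) ε`. -/
theorem parity_pdec_lower :
    ∃ c : ℝ, 0 < c ∧ ∀ d : ℕ, 2 ≤ d → ∀ ε : ℝ, 0 ≤ ε →
      ε * Real.sqrt ((2 : ℝ) ^ d - 1) ≤ 1 →
      ((c * Real.sqrt ((2 : ℝ) ^ d) * ε : ℝ) : EReal) ≤
        ⨆ Mb : coParity d,
          pdecLDP
            (fun (iv : {ν : Measure (Fin d → Bool) // IsProbabilityMeasure ν} ×
                Finset (Fin d)) (_ : (Fin d → Bool) → Bool) => parityModel d iv.1.1 iv.2)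
            (fun iv f => (parityModel d iv.1.1 iv.2 {z | f z.1 ≠ z.2}).toReal)
            (fun _ => Mb.1) ε := by
  refine ⟨1 / 6, by norm_num, fun d hd ε hε hε₁ => ?_⟩
  have : Nonempty (Fin d) := ⟨⟨0, by lia⟩⟩
  have hpow : (2 : ℝ) ^ 2 ≤ 2 ^ d := pow_le_pow_right₀ one_le_two hd
  set t := ε * √((2 : ℝ) ^ d - 1) with ht
  have ht₀ : 0 ≤ t := by positivity
  set ν : Measure (Fin d → Bool) := diracUniform ⊥ t
  have := isProbabilityMeasure_diracUniform (⊥ : Fin d → Bool) ⟨ht₀, hε₁⟩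
  have hν : ∑ x ∈ {⊥}ᶜ, ν.real {x} ^ 2 ≤ ε ^ 2 := by
    have hpos : (0 : ℝ) < 2 ^ d - 1 := by linarith
    rw [sum_sq_measureReal_diracUniform _ ht₀, ht, mul_pow, Real.sq_sqrt hpos.le]
    simp [hpos.ne']
  refine le_iSup_of_le ⟨_, uniformMixture_parityModel_mem_coParity (ν := ν)⟩
    (le_trans ?_ (measureReal_compl_bot_div_three_le_parityPDEC ν hν))
  rw [measureReal_diracUniform_compl _ ht₀, EReal.coe_le_coe_iff]
  linarith [mul_le_mul_of_nonneg_left (sqrt_le_two_mul_sqrt_sub_one (a := 2 ^ d) (by linarith)) hε]
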